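/- Let ℓ be a prime, G a finite ℓ-group, and L/ℚ a finite Galois extension with Galois group isomorphic to G which is tamely ramified (every rational prime p that ramifies in L is prime to |G|). Then the number of rational primes that ramify in L is at least rank(G), the minimal number of generators of G. -/

import Mathlib

open NumberField

/-- A rational prime `p` ramifies in the number field `L`: some prime ideal of the ring
of integers of `L` has ramification index greater than one over `p`, i.e. the square of
a prime ideal divides `p 𝓞_L`. -/
def RamifiesIn (p : ℕ) (L : Type*) [Field L] [NumberField L] : Prop :=
  ∃ P : Ideal (𝓞 L), P.IsPrime ∧ Ideal.span {(p : 𝓞 L)} ≤ P ^ 2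

section TameInertia

variable {S G : Type*} [CommRing S] [Group G] [MulSemiringAction G S] {P : Ideal S} {σ : G}

/-- An element of the inertia group that acts trivially on `P / P ^ 2` acts trivially on all
the graded pieces `P ^ k / P ^ (k + 1)`. -/
lemma smul_sub_mem_pow_succ (hσ : σ ∈ P.inertia G) (h : ∀ y ∈ P, σ • y - y ∈ P ^ 2)
    (k : ℕ) {y : S} (hy : y ∈ P ^ k) : σ • y - y ∈ P ^ (k + 1) := by
  induction k generalizing y with
  | zero => simpa using hσ y
  | succ k ih =>
    rw [pow_succ] at hy
    refine Submodule.mul_induction_on hy (fun a ha b hb ↦ ?_) fun a b ha hb ↦ ?_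
    · have hσa : σ • a ∈ P ^ k := by
        simpa using add_mem (Ideal.pow_le_pow_right k.le_succ (ih ha)) ha
      have h₁ : (σ • a) * (σ • b - b) ∈ P ^ (k + 1 + 1) := by
        rw [add_assoc, pow_add]
        exact Ideal.mul_mem_mul hσa (h b hb)
      have h₂ : (σ • a - a) * b ∈ P ^ (k + 1 + 1) := by
        rw [pow_succ]
        exact Ideal.mul_mem_mul (ih ha) hb
      convert add_mem h₁ h₂ using 1
      rw [smul_mul']
      ring
    · convert add_mem ha hb using 1
      rw [smul_add]
      ring

/-- An inertia element acting trivially on `P / P ^ 2`, of order prime to `P`, is trivial. -/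
lemma eq_one_of_smul_sub_mem_sq [IsDedekindDomain S] [FaithfulSMul G S] [P.IsPrime]
    (hσ : σ ∈ P.inertia G) (h : ∀ y ∈ P, σ • y - y ∈ P ^ 2) {n : ℕ} (hn : σ ^ n = 1)
    (hnP : (n : S) ∉ P) : σ = 1 := by
  have key (x : S) (k : ℕ) : σ • x - x ∈ P ^ (k + 1) := by
    induction k with
    | zero => simpa using hσ x
    | succ k ih =>
      have hpow (m : ℕ) : σ ^ m • x - x - m * (σ • x - x) ∈ P ^ (k + 1 + 1) := by
        induction m with
        | zero => simp
        | succ m ihm =>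
          have h₁ : σ • (σ ^ m • x - x - m * (σ • x - x)) ∈ P ^ (k + 1 + 1) := by
            simpa using add_mem
              (Ideal.pow_le_pow_right (Nat.le_succ _) (smul_sub_mem_pow_succ hσ h _ ihm)) ihm
          have h₂ := Ideal.mul_mem_left _ (m : S) (smul_sub_mem_pow_succ hσ h _ ih)
          convert add_mem h₁ h₂ using 1
          have hm : σ • (m : S) = m := map_natCast (MulSemiringAction.toRingHom G S σ) m
          rw [pow_succ', mul_smul, smul_sub, smul_sub, smul_mul', hm]
          push_cast
          ring
      have hnx := hpow n
      rw [hn, one_smul, sub_self, zero_sub, neg_mem_iff] at hnx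
      exact (Ideal.IsPrime.mul_mem_pow P hnx).resolve_left hnP
  refine FaithfulSMul.eq_of_smul_eq_smul (α := S) fun x ↦ ?_
  rw [one_smul, ← sub_eq_zero, ← Ideal.mem_bot,
    ← Ideal.iInf_pow_eq_bot_of_isDomain P Ideal.IsPrime.ne_top', Ideal.mem_iInf]
  exact fun k ↦ Ideal.pow_le_pow_right k.le_succ (key x k)

/-- A tame inertia group is cyclic. -/
theorem isCyclic_inertia_of_natCard_notMem [IsDedekindDomain S] [FaithfulSMul G S] [Finite G]
    [P.IsPrime] (hP : P ≠ ⊥) (hcard : (Nat.card G : S) ∉ P) : IsCyclic (P.inertia G) := by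
  obtain ⟨π, hπ, hπ'⟩ : ∃ π ∈ P, π ∉ P ^ 2 :=
    SetLike.exists_of_lt
      (by simpa using Ideal.pow_right_strictAnti P hP Ideal.IsPrime.ne_top' one_lt_two)
  have smul_mem {σ : G} (hσ : σ ∈ P.inertia G) {y : S} (hy : y ∈ P) : σ • y ∈ P := by
    simpa using add_mem (hσ y) hy
  have smul_mem_sq {σ : G} (hσ : σ ∈ P.inertia G) {y : S} (hy : y ∈ P ^ 2) : σ • y ∈ P ^ 2 := by
    rw [pow_two] at hy ⊢
    refine Submodule.mul_induction_on hy (fun a ha b hb ↦ ?_) fun a b ha hb ↦ ?_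
    · rw [smul_mul']
      exact Ideal.mul_mem_mul (smul_mem hσ ha) (smul_mem hσ hb)
    · rw [smul_add]
      exact add_mem ha hb
  have exists_mul {y : S} (hy : y ∈ P) : ∃ a : S, y - a * π ∈ P ^ 2 := by
    obtain ⟨d, e, he, h⟩ := Ideal.exists_mul_add_mem_pow_succ (i := 1) hP π y (by simpa) hπ'
      (by simpa)
    exact ⟨d, by rw [← h]; convert he using 1; ring⟩
  have unique {a b : S} (h : a * π - b * π ∈ P ^ 2) :
      Ideal.Quotient.mk P a = Ideal.Quotient.mk P b := by
    rw [Ideal.Quotient.eq]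
    rw [← sub_mul] at h
    by_contra hab
    exact hπ' ((Ideal.IsPrime.mul_mem_pow P h).resolve_left hab)
  choose θ hθ using fun σ : P.inertia G ↦ exists_mul (smul_mem σ.2 hπ)
  let f : P.inertia G →* S ⧸ P :=
    { toFun σ := Ideal.Quotient.mk P (θ σ)
      map_one' := by
        rw [← map_one (Ideal.Quotient.mk P)]
        refine unique ?_
        simpa using neg_mem (hθ 1)
      map_mul' σ τ := by
        rw [← map_mul]
        refine unique ?_
        have h₁ := smul_mem_sq σ.2 (hθ τ)
        have h₂ : ((σ : G) • θ τ - θ τ) * (σ : G) • π ∈ P ^ 2 := by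
          rw [pow_two]
          exact Ideal.mul_mem_mul (σ.2 _) (smul_mem σ.2 hπ)
        have h₃ := Ideal.mul_mem_left _ (θ τ) (hθ σ)
        convert add_mem (add_mem (add_mem h₁ h₂) h₃) (neg_mem (hθ (σ * τ))) using 1
        rw [smul_sub, smul_mul', Subgroup.coe_mul, mul_smul]
        ring }
  refine isCyclic_of_injective_ringHom f ((injective_iff_map_eq_one f).mpr fun σ hσ ↦ ?_)
  have hσπ : (σ : G) • π - π ∈ P ^ 2 := by
    have h : θ σ - 1 ∈ P := by
      rw [← Ideal.Quotient.eq, map_one]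
      exact hσ
    have h' : (θ σ - 1) * π ∈ P ^ 2 := by
      rw [pow_two]
      exact Ideal.mul_mem_mul h hπ
    convert add_mem (hθ σ) h' using 1
    ring
  refine Subtype.ext (eq_one_of_smul_sub_mem_sq σ.2 (fun y hy ↦ ?_) (pow_card_eq_one' (x := σ.1))
    hcard)
  obtain ⟨a, ha⟩ := exists_mul hy
  have h₁ : ((σ : G) • a - a) * (σ : G) • π ∈ P ^ 2 := by
    rw [pow_two]
    exact Ideal.mul_mem_mul (σ.2 a) (smul_mem σ.2 hπ)
  have h₂ := Ideal.mul_mem_left _ a hσπ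
  convert add_mem (add_mem h₁ h₂) (sub_mem (smul_mem_sq σ.2 ha) ha) using 1
  rw [smul_sub, smul_mul']
  ring

open scoped Pointwise in
/-- A normal subgroup containing an inertia group contains the inertia groups of all conjugate
primes. -/
lemma inertia_smul_le_of_normal {M : Subgroup G} [M.Normal] (τ : G) (h : P.inertia G ≤ M) :
    (τ • P).inertia G ≤ M := by
  intro σ hσ
  have hconj : τ⁻¹ * σ * τ ∈ P.inertia G := fun x ↦ by
    have hx := hσ (τ • x)
    have := (Ideal.mem_pointwise_smul_iff_inv_smul_mem (a := τ)).mp hx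
    simpa [mul_smul, smul_sub] using this
  simpa [mul_assoc] using Subgroup.Normal.conj_mem ‹_› _ (h hconj) τ

end TameInertia

section RamifiedPrimes

variable {L : Type*} [Field L] [NumberField L]

lemma isUnramifiedAt_int_iff_not_le_sq {p : ℕ} (hp : p.Prime) (P : Ideal (𝓞 L)) [P.IsPrime]
    (hpP : (p : 𝓞 L) ∈ P) :
    Algebra.IsUnramifiedAt ℤ P ↔ ¬ Ideal.span {(p : 𝓞 L)} ≤ P ^ 2 := by
  have hp' : Prime (p : ℤ) := Nat.prime_iff_prime_int.mp hp
  have : P.LiesOver (Ideal.span {(p : ℤ)}) :=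
    (Ideal.liesOver_span_iff Ideal.IsPrime.ne_top' hp').mpr (by simpa using hpP)
  have hmap : (Ideal.span {(p : ℤ)}).map (algebraMap ℤ (𝓞 L)) = Ideal.span {(p : 𝓞 L)} := by
    simp [Ideal.map_span]
  have hle : (Ideal.span {(p : ℤ)}).map (algebraMap ℤ (𝓞 L)) ≤ P := by
    rwa [hmap, Ideal.span_singleton_le_iff_mem]
  rw [← Ideal.ramificationIdx_eq_one_iff, ← hmap, ← Ideal.ramificationIdx'_ne_one_iff hle,
    not_not, Ideal.ramificationIdx'_eq_ramificationIdx _ _ (by simpa using hp'.ne_zero)]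

lemma mem_of_span_singleton_le_sq {R : Type*} [CommRing R] {x : R} {P : Ideal R}
    (h : Ideal.span {x} ≤ P ^ 2) : x ∈ P :=
  Ideal.pow_le_self two_ne_zero (h (Ideal.mem_span_singleton_self _))

variable (L) in
lemma finite_setOf_ramifiesIn : {p : ℕ | p.Prime ∧ RamifiesIn p L}.Finite := by
  refine (discr L).natAbs.divisors.finite_toSet.subset fun p ⟨hp, P, hP, h⟩ ↦ ?_
  have hpP := mem_of_span_singleton_le_sq h
  have hdvd : (p : ℤ) ∣ discr L := by
    by_contra hdvd
    have hP' := (not_dvd_discr_iff_forall_mem L (𝓞 L) (Nat.prime_iff_prime_int.mp hp)).mp hdvd P hP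
      (by simpa using hpP)
    exact (isUnramifiedAt_int_iff_not_le_sq hp P hpP).mp hP' h
  simpa [discr_ne_zero] using Int.natCast_dvd.mp hdvd

variable [IsGalois ℚ L]

lemma inertia_eq_bot_of_isUnramifiedAt (P : Ideal (𝓞 L)) [P.IsMaximal]
    (h : Algebra.IsUnramifiedAt ℤ P) : P.inertia (L ≃ₐ[ℚ] L) = ⊥ := by
  rw [← Subgroup.card_eq_one, Ideal.card_inertia_eq_ramificationIdxIn (P.under ℤ) P,
    Ideal.ramificationIdxIn_eq_ramificationIdx (P.under ℤ) P (L ≃ₐ[ℚ] L)]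
  exact Ideal.ramificationIdx_eq_one_iff.mpr h

/-- The Galois group of a number field over `ℚ` is generated by its inertia groups. -/
theorem eq_top_of_forall_inertia_le (M : Subgroup (L ≃ₐ[ℚ] L))
    (h : ∀ P : Ideal (𝓞 L), P.IsMaximal → P.inertia (L ≃ₐ[ℚ] L) ≤ M) : M = ⊤ := by
  let K : IntermediateField ℚ L := FixedPoints.intermediateField M
  have : IsGaloisGroup M K L := IsGaloisGroup.subgroup (L ≃ₐ[ℚ] L) ℚ L M
  have : IsGaloisGroup M (𝓞 K) (𝓞 L) := IsGaloisGroup.of_isFractionRing M (𝓞 K) (𝓞 L) K L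
  have hK : Module.finrank ℚ K = 1 := by
    by_contra hK
    obtain ⟨P, _, hP⟩ := NumberField.exists_not_isUnramifiedAt_int (𝒪 := 𝓞 K) hK
    obtain ⟨Q, _, _⟩ := Ideal.exists_maximal_ideal_liesOver_of_isIntegral (S := 𝓞 L) P
    refine hP (Ideal.ramificationIdx_eq_one_iff.mp ?_)
    have hQ : Nat.card (Q.inertia (L ≃ₐ[ℚ] L)) = Nat.card (Q.inertia M) := by
      rw [← Subgroup.card_map_of_injective M.subtype_injective, AddSubgroup.inertia_map_subtype,
        inf_eq_left.mpr (h Q ‹_›)]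
    have hP0 : P ≠ ⊥ := Ideal.IsMaximal.ne_bot_of_isIntegral_int P
    have : Finite (𝓞 K ⧸ P) := Ring.HasFiniteQuotients.finiteQuotient hP0
    rw [Ideal.card_inertia_eq_ramificationIdxIn (Q.under ℤ) Q,
      Ideal.ramificationIdxIn_eq_ramificationIdx (Q.under ℤ) Q (L ≃ₐ[ℚ] L),
      Ideal.card_inertia_eq_ramificationIdxIn P Q,
      Ideal.ramificationIdxIn_eq_ramificationIdx P Q M,
      Ideal.ramificationIdx_tower (R := ℤ) P Q] at hQ
    exact (mul_eq_right₀ (Ideal.ramificationIdx_pos Q (𝓞 K)).ne').mp hQ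
  refine Subgroup.eq_top_of_card_eq M ?_
  rw [IsGaloisGroup.card_eq_finrank M K L, IsGaloisGroup.card_eq_finrank (L ≃ₐ[ℚ] L) ℚ L,
    ← Module.finrank_mul_finrank ℚ K L, hK, one_mul]

lemma eq_top_of_normal_of_forall_exists_inertia_le (M : Subgroup (L ≃ₐ[ℚ] L)) [M.Normal]
    (h : ∀ p : ℕ, p.Prime → RamifiesIn p L →
      ∃ P : Ideal (𝓞 L), P.IsPrime ∧ (p : 𝓞 L) ∈ P ∧ P.inertia (L ≃ₐ[ℚ] L) ≤ M) : M = ⊤ := by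
  refine eq_top_of_forall_inertia_le M fun Q _ ↦ ?_
  by_cases hQ : Algebra.IsUnramifiedAt ℤ Q
  · simp [inertia_eq_bot_of_isUnramifiedAt Q hQ]
  obtain ⟨p, hp, hpQ⟩ : ∃ p : ℕ, p.Prime ∧ (p : 𝓞 L) ∈ Q := by
    have hQ0 : Q ≠ ⊥ := Ideal.IsMaximal.ne_bot_of_isIntegral_int Q
    have : Finite (𝓞 L ⧸ Q) := Ring.HasFiniteQuotients.finiteQuotient hQ0
    obtain ⟨p, hchar⟩ := CharP.exists (𝓞 L ⧸ Q)
    refine ⟨p, (CharP.char_is_prime_or_zero (𝓞 L ⧸ Q) p).resolve_right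
      (CharP.char_ne_zero_of_finite (𝓞 L ⧸ Q) p), ?_⟩
    rw [← Ideal.Quotient.eq_zero_iff_mem, map_natCast]
    exact CharP.cast_eq_zero _ p
  obtain ⟨P, _, hpP, hPM⟩ := h p hp
    ⟨Q, inferInstance, not_not.mp ((isUnramifiedAt_int_iff_not_le_sq hp Q hpQ).not.mp hQ)⟩
  have hp' : Prime (p : ℤ) := Nat.prime_iff_prime_int.mp hp
  have : P.LiesOver (Ideal.span {(p : ℤ)}) :=
    (Ideal.liesOver_span_iff Ideal.IsPrime.ne_top' hp').mpr (by simpa using hpP)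
  have : Q.LiesOver (Ideal.span {(p : ℤ)}) :=
    (Ideal.liesOver_span_iff Ideal.IsPrime.ne_top' hp').mpr (by simpa using hpQ)
  obtain ⟨τ, rfl⟩ := Ideal.exists_smul_eq_of_isGaloisGroup (Ideal.span {(p : ℤ)}) P Q (L ≃ₐ[ℚ] L)
  exact inertia_smul_le_of_normal τ hPM

end RamifiedPrimes

/-- Let `ℓ` be a prime, `G` a finite `ℓ`-group and `L/ℚ` a finite Galois extension with
Galois group isomorphic to `G` which is tamely ramified (every ramified rational prime
is prime to `|G|`). Then at least `rank G` rational primes ramify in `L`. -/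
theorem rank_le_card_ramified_primes (ℓ : ℕ) (hℓ : ℓ.Prime) (G : Type) [Group G] [Finite G]
    (hG : IsPGroup ℓ G) (L : Type) [Field L] [NumberField L] [IsGalois ℚ L]
    (e : (L ≃ₐ[ℚ] L) ≃* G)
    (htame : ∀ p : ℕ, p.Prime → RamifiesIn p L → Nat.Coprime p (Nat.card G)) :
    Group.rank G ≤ {p : ℕ | p.Prime ∧ RamifiesIn p L}.ncard := by
  classical
  have : Fact ℓ.Prime := ⟨hℓ⟩
  have : Group.IsNilpotent (L ≃ₐ[ℚ] L) := (hG.of_equiv e.symm).isNilpotent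
  have hgen (p : ℕ) (hp : p.Prime) (hram : RamifiesIn p L) : ∃ g : L ≃ₐ[ℚ] L,
      ∃ P : Ideal (𝓞 L), P.IsPrime ∧ (p : 𝓞 L) ∈ P ∧
        P.inertia (L ≃ₐ[ℚ] L) = Subgroup.zpowers g := by
    obtain ⟨P, hP, hle⟩ := id hram
    have hpP := mem_of_span_singleton_le_sq hle
    have hP0 : P ≠ ⊥ := by
      rintro rfl
      simp [hp.ne_zero] at hpP
    have hcard : (Nat.card (L ≃ₐ[ℚ] L) : 𝓞 L) ∉ P := fun hmem ↦ by
      rw [Nat.card_congr e.toEquiv] at hmem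
      have hcop : IsCoprime (p : 𝓞 L) (Nat.card G) := (htame p hp hram).cast
      obtain ⟨a, b, hab⟩ := hcop
      refine Ideal.IsPrime.ne_top' ((Ideal.eq_top_iff_one P).mpr ?_)
      rw [← hab]
      exact add_mem (P.mul_mem_left a hpP) (P.mul_mem_left b hmem)
    have : FaithfulSMul (L ≃ₐ[ℚ] L) (𝓞 L) := IsGaloisGroup.faithful ℤ
    obtain ⟨g, hg⟩ := Subgroup.isCyclic_iff_exists_zpowers_eq_top (P.inertia (L ≃ₐ[ℚ] L)) |>.mp
      (isCyclic_inertia_of_natCard_notMem hP0 hcard)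
    exact ⟨g, P, hP, hpP, hg.symm⟩
  choose! g hg using hgen
  have hfin := finite_setOf_ramifiesIn L
  have htop : Subgroup.closure (g '' {p : ℕ | p.Prime ∧ RamifiesIn p L}) = ⊤ := by
    by_contra hne
    obtain ⟨M, hM, hle⟩ := (eq_top_or_exists_le_coatom _).resolve_left hne
    have : M.Normal := Subgroup.NormalizerCondition.normal_of_coatom M
      Group.normalizerCondition_of_isNilpotent hM
    refine hM.1 (eq_top_of_normal_of_forall_exists_inertia_le M fun p hp hram ↦ ?_)
    obtain ⟨P, hP, hpP, hin⟩ := hg p hp hram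
    refine ⟨P, hP, hpP, ?_⟩
    rw [hin, Subgroup.zpowers_le]
    exact hle (Subgroup.subset_closure ⟨p, ⟨hp, hram⟩, rfl⟩)
  calc Group.rank G = Group.rank (L ≃ₐ[ℚ] L) := (Group.rank_congr e).symm
    _ ≤ (hfin.toFinset.image g).card := Group.rank_le (by simpa using htop)
    _ ≤ hfin.toFinset.card := Finset.card_image_le
    _ = _ := (Set.ncard_eq_toFinset_card _ hfin).symm
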